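/- Let γ be the unit circle in ℂ and suppose S̃¹(z;t), S̃²(z;t) are smooth in parameters t = (t¹ₙ, t²ₙ) and continuous in z on γ, arising from solutions of the Hamiltonian ∂̄-problem so that the Hirota-type identity holds: for any two parameter directions δ, δ̃, the function δS¹·δ̃S² − δ̃S¹·δS² (with Sⁱ = Sⁱ₀ + S̃ⁱ, Sⁱ₀ = Σₙ tⁱₙ z^{n−1}) extends holomorphically to the unit disc. Then the one-form θ = (1/2πi)∮_γ (S̃² δS¹₀ − S̃¹ δS²₀) dz on the (finitely truncated) time space is closed: δθ = 0, i.e. ∂/∂t^a θ_b − ∂/∂t^b θ_a = 0 for all pairs of time variables a, b. -/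

import Mathlib

open Metric

/-- Partial derivative ∂/∂tₐ of a ℂ-valued function of finitely many (truncated) times. -/
noncomputable def ptd {d : ℕ} (a : Fin d) (F : (Fin d → ℝ) → ℂ) (t : Fin d → ℝ) : ℂ :=
  fderiv ℝ F t (Pi.single a 1)

/-!
The pairing `ω(f, g) = ∮ (f⁰ g¹ - f¹ g⁰) dz` on pairs of functions is alternating. Pairs holomorphic
inside the circle form an isotropic subspace by Cauchy's theorem. So do pairs holomorphic outside
and vanishing at infinity: the product of two such functions is `O(z⁻²)`, and the circle can be
pushed off to infinity. Now `θ_v = ω(∂_v S₀, S̃) / 2πi`, hence `∂_w θ_v = ω(∂_v S₀, ∂_w S̃) / 2πi`,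
and expanding `ω(∂_v S, ∂_w S) = 0` with `S = S₀ + S̃` leaves only the two mixed terms
`ω(∂_v S₀, ∂_w S̃) - ω(∂_w S₀, ∂_v S̃)`. That `ω(∂_v S̃, ∂_w S̃)` vanishes is obtained by
differentiating `∮ S̃⁰(z, s) S̃¹(z, t) dz = 0` in `s` and `t` separately, which avoids showing that
the derivatives of `S̃` are again holomorphic.
-/

open Bornology Filter Set Topology
open scoped Asymptotics

section Infinity

variable {F : Type*} [NormedAddCommGroup F] [NormedSpace ℂ F] {c : ℂ} {R : ℝ}

theorem isBigO_sub_inv_of_tendsto_cobounded_zero [CompleteSpace F] {f : ℂ → F} (c : ℂ)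
    (hf : ∀ᶠ z in cobounded ℂ, DifferentiableAt ℂ f z) (hlim : Tendsto f (cobounded ℂ) (𝓝 0)) :
    f =O[cobounded ℂ] fun z => (z - c)⁻¹ := by
  set g : ℂ → F := Function.update (fun w => f (c + w⁻¹)) 0 0 with hg
  have hinfty : Tendsto (fun w : ℂ => c + w⁻¹) (𝓝[≠] 0) (cobounded ℂ) :=
    (tendsto_const_add_cobounded c).comp tendsto_inv₀_nhdsNE_zero
  have hcont : ContinuousAt g 0 := by
    rw [hg, continuousAt_update_same]
    exact hlim.comp hinfty
  have hdiff : ∀ᶠ w in 𝓝[≠] (0 : ℂ), DifferentiableAt ℂ g w := by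
    filter_upwards [hinfty.eventually hf, self_mem_nhdsWithin] with w hw hw0
    have hcomp : DifferentiableAt ℂ (fun w => f (c + w⁻¹)) w :=
      hw.comp w ((differentiableAt_inv hw0).const_add c)
    exact hcomp.congr_of_eventuallyEq
      ((isOpen_ne.eventually_mem hw0).mono fun y hy => Function.update_of_ne hy _ _)
  have hbigO : g =O[𝓝 0] fun w => w := by
    simpa [hg] using (Complex.analyticAt_of_differentiable_on_punctured_nhds_of_continuousAt
      hdiff hcont).differentiableAt.isBigO_sub
  have hcenter : Tendsto (fun z : ℂ => (z - c)⁻¹) (cobounded ℂ) (𝓝 0) :=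
    tendsto_inv₀_cobounded.comp (tendsto_sub_const_cobounded c)
  refine (hbigO.comp_tendsto hcenter).congr' ?_ .rfl
  filter_upwards [eventually_ne_cobounded c] with z hz
  simp [hg, inv_ne_zero (sub_ne_zero.2 hz)]

theorem eventually_differentiableAt_cobounded {f : ℂ → F}
    (hf : DifferentiableOn ℂ f (closedBall c R)ᶜ) :
    ∀ᶠ z in cobounded ℂ, DifferentiableAt ℂ f z := by
  filter_upwards [(hasBasis_cobounded_compl_closedBall c).mem_of_mem (i := R) trivial] with z hz
  exact hf.differentiableAt (isClosed_closedBall.isOpen_compl.mem_nhds hz)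

theorem diffContOnCl_compl_closedBall_zero {f : ℂ → F} (hf : DifferentiableOn ℂ f {z | R < ‖z‖})
    (hcont : Continuous f) : DiffContOnCl ℂ f (closedBall 0 R)ᶜ :=
  ⟨hf.mono fun z hz => by simpa using hz, hcont.continuousOn⟩

theorem circleIntegral_eq_of_diffContOnCl_compl_closedBall {f : ℂ → F} {r : ℝ} (hR : 0 < R)
    (hr : R ≤ r) (hf : DiffContOnCl ℂ f (closedBall c R)ᶜ) :
    (∮ z in C(c, r), f z) = ∮ z in C(c, R), f z := by
  refine Complex.circleIntegral_eq_of_differentiable_on_annulus_off_countable hR hr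
    countable_empty (hf.continuousOn.mono ?_) fun z hz => ?_
  · rw [closure_compl, interior_closedBall c hR.ne']
    exact fun z hz => hz.2
  · exact hf.differentiableAt isClosed_closedBall.isOpen_compl hz.1.2

theorem circleIntegral_eq_zero_of_isLittleO_sub_inv {f : ℂ → F} (hR : 0 < R)
    (hf : DiffContOnCl ℂ f (closedBall c R)ᶜ) (hdecay : f =o[cobounded ℂ] fun z => (z - c)⁻¹) :
    (∮ z in C(c, R), f z) = 0 := by
  have hsmall : ∀ ε > 0, ‖∮ z in C(c, R), f z‖ ≤ 2 * Real.pi * ε := by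
    intro ε hε
    obtain ⟨r, -, hr⟩ :=
      (hasBasis_cobounded_compl_closedBall c).eventually_iff.1 (hdecay.bound hε)
    obtain ⟨ρ, hρ⟩ := exists_gt (max r R)
    have hrρ : r < ρ := (le_max_left r R).trans_lt hρ
    have hRρ : R < ρ := (le_max_right r R).trans_lt hρ
    have hρ0 : 0 < ρ := hR.trans hRρ
    have hbound : ∀ z ∈ sphere c ρ, ‖f z‖ ≤ ε * ρ⁻¹ := by
      intro z hz
      have hzρ : ‖z - c‖ = ρ := mem_sphere_iff_norm.1 hz
      have hzr : z ∈ (closedBall c r)ᶜ := by simpa [dist_eq_norm, hzρ] using hrρ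
      simpa [hzρ] using hr hzr
    rw [← circleIntegral_eq_of_diffContOnCl_compl_closedBall hR hRρ.le hf]
    calc ‖∮ z in C(c, ρ), f z‖ ≤ 2 * Real.pi * ρ * (ε * ρ⁻¹) :=
          circleIntegral.norm_integral_le_of_norm_le_const hρ0.le hbound
      _ = 2 * Real.pi * ε := by field_simp
  have hlim : Tendsto (fun ε : ℝ => 2 * Real.pi * ε) (𝓝[>] 0) (𝓝 0) := by
    simpa using (tendsto_id.const_mul (2 * Real.pi)).mono_left (nhdsWithin_le_nhds (a := (0 : ℝ)))
  exact norm_le_zero_iff.1 (ge_of_tendsto hlim (eventually_mem_nhdsWithin.mono hsmall))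

theorem circleIntegral_mul_eq_zero_of_tendsto_cobounded_zero {f g : ℂ → ℂ} (hR : 0 < R)
    (hf : DiffContOnCl ℂ f (closedBall c R)ᶜ) (hf0 : Tendsto f (cobounded ℂ) (𝓝 0))
    (hg : DiffContOnCl ℂ g (closedBall c R)ᶜ) (hg0 : Tendsto g (cobounded ℂ) (𝓝 0)) :
    (∮ z in C(c, R), f z * g z) = 0 := by
  have hdecay : (fun z => f z * g z) =o[cobounded ℂ] fun z => (z - c)⁻¹ := by
    simpa using (isBigO_sub_inv_of_tendsto_cobounded_zero c
      (eventually_differentiableAt_cobounded hf.differentiableOn) hf0).mul_isLittleO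
      ((Asymptotics.isLittleO_one_iff ℂ).2 hg0)
  exact circleIntegral_eq_zero_of_isLittleO_sub_inv hR (hf.smul hg) hdecay

end Infinity

section ContinuouslyDifferentiableFamily

variable {X E F : Type*} [NormedAddCommGroup E] [NormedSpace ℝ E] [NormedAddCommGroup F]

/-- A family `f z : E → F` of continuously differentiable functions, indexed by `z ∈ K`, whose
values and derivatives depend continuously on `z`; this is what differentiation under an integral
over a compact `K` requires. Joint continuity is asked of the derivatives only. -/
structure IsC1Family [TopologicalSpace X] [NormedSpace ℝ F] (K : Set X) (f : X → E → F) :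
    Prop where
  continuousOn : ∀ t, ContinuousOn (fun z => f z t) K
  differentiableAt : ∀ z ∈ K, ∀ t, DifferentiableAt ℝ (f z) t
  continuousOn_fderiv : ContinuousOn (fun p : X × E => fderiv ℝ (f p.1) p.2) (K ×ˢ univ)

namespace IsC1Family

theorem of_contDiff [NormedAddCommGroup X] [NormedSpace ℝ X] [NormedSpace ℝ F] {f : X → E → F}
    (K : Set X) (hf : ContDiff ℝ 1 fun p : X × E => f p.1 p.2) : IsC1Family K f where
  continuousOn t := (hf.continuous.comp (by fun_prop : Continuous fun z => (z, t))).continuousOn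
  differentiableAt z _ t :=
    ((hf.comp (contDiff_prodMk_right z)).differentiable one_ne_zero).differentiableAt
  continuousOn_fderiv :=
    (ContDiff.fderiv (n := 0) (hf.comp (contDiff_fst.fst.prodMk contDiff_snd) :
      ContDiff ℝ 1 (Function.uncurry fun p : X × E => f p.1)) contDiff_snd
      (zero_add 1).le).continuous.continuousOn

section Operations

variable [TopologicalSpace X] {K : Set X}

theorem continuousOn_fderiv_apply [NormedSpace ℝ F] {f : X → E → F} (hf : IsC1Family K f)
    (t v : E) : ContinuousOn (fun z => fderiv ℝ (f z) t v) K :=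
  (hf.continuousOn_fderiv.comp (by fun_prop : ContinuousOn (fun z => (z, t)) K)
    fun _ hz => ⟨hz, mem_univ t⟩).clm_apply continuousOn_const

theorem sub [NormedSpace ℝ F] {f g : X → E → F} (hf : IsC1Family K f) (hg : IsC1Family K g) :
    IsC1Family K fun z t => f z t - g z t where
  continuousOn t := (hf.continuousOn t).sub (hg.continuousOn t)
  differentiableAt z hz t := (hf.differentiableAt z hz t).sub (hg.differentiableAt z hz t)
  continuousOn_fderiv := (hf.continuousOn_fderiv.sub hg.continuousOn_fderiv).congr fun p hp =>
    fderiv_fun_sub (hf.differentiableAt p.1 hp.1 p.2) (hg.differentiableAt p.1 hp.1 p.2)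

theorem weight_mul {f : X → E → ℂ} {φ : X → ℂ} (hφ : ContinuousOn φ K) (hf : IsC1Family K f) :
    IsC1Family K fun z t => φ z * f z t where
  continuousOn t := hφ.mul (hf.continuousOn t)
  differentiableAt z hz t := (hf.differentiableAt z hz t).const_mul (φ z)
  continuousOn_fderiv :=
    ((hφ.comp continuousOn_fst fun _ hp => hp.1).smul hf.continuousOn_fderiv).congr fun p hp =>
      fderiv_const_mul (hf.differentiableAt p.1 hp.1 p.2) (φ p.1)

end Operations

section CircleIntegral

variable [NormedSpace ℂ F] {c : ℂ} {R : ℝ}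

theorem hasFDerivAt_circleIntegral {f : ℂ → E → F} (hR : 0 ≤ R)
    (hf : IsC1Family (sphere c R) f) (t : E) :
    HasFDerivAt (fun s => ∮ z in C(c, R), f z s) (∮ z in C(c, R), fderiv ℝ (f z) t) t := by
  have hmem (x : ℝ) : circleMap c R x ∈ sphere c R := circleMap_mem_sphere c hR x
  have hvelocity : Continuous (deriv (circleMap c R)) := by
    simp only [funext (deriv_circleMap c R)]
    fun_prop
  set G : ℝ × E → E →L[ℝ] F := fun p =>
    deriv (circleMap c R) p.1 • fderiv ℝ (f (circleMap c R p.1)) p.2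
  have hG : Continuous G := (hvelocity.comp continuous_fst).smul
    (hf.continuousOn_fderiv.comp_continuous
      (by fun_prop : Continuous fun p : ℝ × E => (circleMap c R p.1, p.2))
      fun p => ⟨hmem p.1, mem_univ _⟩)
  have hintegrand (s : E) :
      Continuous fun x => deriv (circleMap c R) x • f (circleMap c R x) s :=
    hvelocity.smul ((hf.continuousOn s).comp_continuous (continuous_circleMap c R) hmem)
  obtain ⟨C, hC⟩ : ∃ C, ∀ᶠ s in 𝓝 t, ∀ x ∈ uIcc 0 (2 * Real.pi), ‖G (x, s)‖ ≤ C := by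
    obtain ⟨C, hC⟩ := isCompact_uIcc.exists_bound_of_continuousOn
      (f := fun x => G (x, t)) (by fun_prop)
    refine ⟨C + 1, isCompact_uIcc.eventually_forall_of_forall_eventually fun x hx => ?_⟩
    have hlt : ‖G (x, t)‖ < C + 1 := (hC x hx).trans_lt (lt_add_one C)
    have hswap : Continuous fun p : E × ℝ => ‖G (p.2, p.1)‖ := by fun_prop
    exact (hswap.tendsto (t, x)).eventually_le_const hlt
  exact intervalIntegral.hasFDerivAt_integral_of_dominated_of_fderiv_le (bound := fun _ => C)
    (F' := fun s x => G (x, s)) hC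
    (.of_forall fun s => (hintegrand s).aestronglyMeasurable)
    ((hintegrand t).intervalIntegrable _ _)
    (by fun_prop : Continuous fun x => G (x, t)).aestronglyMeasurable
    (.of_forall fun x hx s hs => hs x (uIoc_subset_uIcc hx))
    intervalIntegrable_const
    (.of_forall fun x _ s _ =>
      (hf.differentiableAt _ (hmem x) s).hasFDerivAt.fun_const_smul _)

theorem fderiv_circleIntegral_apply {f : ℂ → E → F} (hR : 0 ≤ R)
    (hf : IsC1Family (sphere c R) f) (t v : E) :
    fderiv ℝ (fun s => ∮ z in C(c, R), f z s) t v = ∮ z in C(c, R), fderiv ℝ (f z) t v := by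
  have hint : CircleIntegrable (fun z => fderiv ℝ (f z) t) c R :=
    (hf.continuousOn_fderiv.comp (by fun_prop : ContinuousOn (fun z => (z, t)) (sphere c R))
      fun _ hz => ⟨hz, mem_univ t⟩).circleIntegrable hR
  rw [(hf.hasFDerivAt_circleIntegral hR t).fderiv]
  exact ContinuousLinearMap.intervalIntegral_apply hint.out v

theorem circleIntegral_weight_mul_fderiv_eq_zero {φ : ℂ → ℂ} {f : ℂ → E → ℂ} (hR : 0 ≤ R)
    (hφ : ContinuousOn φ (sphere c R)) (hf : IsC1Family (sphere c R) f)
    (hzero : ∀ s, (∮ z in C(c, R), φ z * f z s) = 0) (t v : E) :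
    (∮ z in C(c, R), φ z * fderiv ℝ (f z) t v) = 0 :=
  calc (∮ z in C(c, R), φ z * fderiv ℝ (f z) t v)
      = ∮ z in C(c, R), fderiv ℝ (fun s => φ z * f z s) t v :=
        circleIntegral.integral_congr hR fun z hz => by
          simp [fderiv_const_mul (hf.differentiableAt z hz t)]
    _ = fderiv ℝ (fun s => ∮ z in C(c, R), φ z * f z s) t v :=
        ((hf.weight_mul hφ).fderiv_circleIntegral_apply hR t v).symm
    _ = 0 := by simp [hzero]

theorem circleIntegral_fderiv_mul_fderiv_eq_zero {f g : ℂ → E → ℂ} (hR : 0 ≤ R)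
    (hf : IsC1Family (sphere c R) f) (hg : IsC1Family (sphere c R) g)
    (hzero : ∀ s t, (∮ z in C(c, R), f z s * g z t) = 0) (s t v w : E) :
    (∮ z in C(c, R), fderiv ℝ (f z) s v * fderiv ℝ (g z) t w) = 0 := by
  refine circleIntegral_weight_mul_fderiv_eq_zero hR (hf.continuousOn_fderiv_apply s v) hg
    (fun t => ?_) t w
  simpa only [mul_comm] using circleIntegral_weight_mul_fderiv_eq_zero hR (hg.continuousOn t) hf
    (fun s => by simpa only [mul_comm] using hzero s t) s v

end CircleIntegral

end IsC1Family

end ContinuouslyDifferentiableFamily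

section Pairing

/-- The alternating pairing `∮ (f⁰ g¹ - f¹ g⁰) dz` of two pairs of functions on a circle. -/
noncomputable def circlePairing (c : ℂ) (R : ℝ) (f g : Fin 2 → ℂ → ℂ) : ℂ :=
  ∮ z in C(c, R), (f 0 z * g 1 z - f 1 z * g 0 z)

theorem circlePairing_swap (c : ℂ) (R : ℝ) (f g : Fin 2 → ℂ → ℂ) :
    circlePairing c R g f = -circlePairing c R f g := by
  simp only [circlePairing, circleIntegral, ← intervalIntegral.integral_neg, smul_eq_mul]
  congr 1 with x
  ring

variable {c : ℂ} {R : ℝ} {f f' g g' : Fin 2 → ℂ → ℂ}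

theorem circlePairing_congr (hR : 0 ≤ R) (hf : ∀ i, EqOn (f i) (f' i) (sphere c R))
    (hg : ∀ i, EqOn (g i) (g' i) (sphere c R)) :
    circlePairing c R f g = circlePairing c R f' g' :=
  circleIntegral.integral_congr hR fun z hz => by simp only [hf _ hz, hg _ hz]

theorem circlePairing_eq_sub (hR : 0 ≤ R) (hf : ∀ i, ContinuousOn (f i) (sphere c R))
    (hg : ∀ i, ContinuousOn (g i) (sphere c R)) :
    circlePairing c R f g = (∮ z in C(c, R), f 0 z * g 1 z) - ∮ z in C(c, R), f 1 z * g 0 z :=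
  circleIntegral.integral_sub (((hf 0).mul (hg 1)).circleIntegrable hR)
    (((hf 1).mul (hg 0)).circleIntegrable hR)

theorem circlePairing_add_left (hR : 0 ≤ R) (hf : ∀ i, ContinuousOn (f i) (sphere c R))
    (hf' : ∀ i, ContinuousOn (f' i) (sphere c R)) (hg : ∀ i, ContinuousOn (g i) (sphere c R)) :
    circlePairing c R (f + f') g = circlePairing c R f g + circlePairing c R f' g := by
  have hint {h : Fin 2 → ℂ → ℂ} (hh : ∀ i, ContinuousOn (h i) (sphere c R)) :
      CircleIntegrable (fun z => h 0 z * g 1 z - h 1 z * g 0 z) c R :=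
    (((hh 0).mul (hg 1)).sub ((hh 1).mul (hg 0))).circleIntegrable hR
  rw [circlePairing, circlePairing, circlePairing,
    ← circleIntegral.integral_add (hint hf) (hint hf')]
  congr 1 with z
  simp only [Pi.add_apply]
  ring

theorem circlePairing_add_right (hR : 0 ≤ R) (hf : ∀ i, ContinuousOn (f i) (sphere c R))
    (hg : ∀ i, ContinuousOn (g i) (sphere c R)) (hg' : ∀ i, ContinuousOn (g' i) (sphere c R)) :
    circlePairing c R f (g + g') = circlePairing c R f g + circlePairing c R f g' := by
  rw [circlePairing_swap, circlePairing_add_left hR hg hg' hf, circlePairing_swap c R f g,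
    circlePairing_swap c R f g']
  ring

theorem circlePairing_add_add (hR : 0 ≤ R) (hf : ∀ i, ContinuousOn (f i) (sphere c R))
    (hf' : ∀ i, ContinuousOn (f' i) (sphere c R)) (hg : ∀ i, ContinuousOn (g i) (sphere c R))
    (hg' : ∀ i, ContinuousOn (g' i) (sphere c R)) :
    circlePairing c R (f + f') (g + g') =
      (circlePairing c R f g + circlePairing c R f g') +
        (circlePairing c R f' g + circlePairing c R f' g') := by
  have hsum (i : Fin 2) : ContinuousOn ((g + g') i) (sphere c R) := (hg i).add (hg' i)
  rw [circlePairing_add_left hR hf hf' hsum, circlePairing_add_right hR hf hg hg',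
    circlePairing_add_right hR hf' hg hg']

theorem circlePairing_eq_zero_of_diffContOnCl_ball (hR : 0 ≤ R)
    (hf : ∀ i, DiffContOnCl ℂ (f i) (ball c R)) (hg : ∀ i, DiffContOnCl ℂ (g i) (ball c R)) :
    circlePairing c R f g = 0 :=
  (((hf 0).smul (hg 1)).sub ((hf 1).smul (hg 0))).circleIntegral_eq_zero hR

end Pairing

section OneForm

variable {E : Type*} [NormedAddCommGroup E] [NormedSpace ℝ E] {c : ℂ} {R : ℝ}

theorem circlePairing_fderiv_eq_zero {f : Fin 2 → ℂ → E → ℂ} (hR : 0 < R)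
    (hf : ∀ i, IsC1Family (sphere c R) (f i))
    (hhol : ∀ i t, DiffContOnCl ℂ (fun z => f i z t) (closedBall c R)ᶜ)
    (hinf : ∀ i t, Tendsto (fun z => f i z t) (cobounded ℂ) (𝓝 0)) (t v w : E) :
    circlePairing c R (fun i z => fderiv ℝ (f i z) t v) (fun i z => fderiv ℝ (f i z) t w) = 0 := by
  have hzero (i j : Fin 2) :
      (∮ z in C(c, R), fderiv ℝ (f i z) t v * fderiv ℝ (f j z) t w) = 0 :=
    IsC1Family.circleIntegral_fderiv_mul_fderiv_eq_zero hR.le (hf i) (hf j)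
      (fun s s' => circleIntegral_mul_eq_zero_of_tendsto_cobounded_zero hR
        (hhol i s) (hinf i s) (hhol j s') (hinf j s')) t t v w
  rw [circlePairing_eq_sub hR.le (fun i => (hf i).continuousOn_fderiv_apply t v)
    (fun i => (hf i).continuousOn_fderiv_apply t w), hzero, hzero, sub_zero]

/-- The one-form `θ = (1/2πi) ∮ (S̃² δS¹₀ - S̃¹ δS²₀) dz` on the space `E` of times, evaluated on
the direction `v` at the point `t`. Superscripts `1, 2` are the indices `0, 1 : Fin 2`. The free
part `S₀` is linear in the times, so that its differential in the direction `v` is `S₀ i z v`. The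
direction precedes the point, so that `hirotaOneForm c R S₀ St v` is a component of `θ`. -/
noncomputable def hirotaOneForm (c : ℂ) (R : ℝ) (S₀ : Fin 2 → ℂ → E →L[ℝ] ℂ)
    (St : Fin 2 → ℂ → E → ℂ) (v t : E) : ℂ :=
  (1 / (2 * Real.pi * Complex.I)) *
    circlePairing c R (fun i z => S₀ i z v) (fun i z => St i z t)

theorem fderiv_hirotaOneForm {S₀ : Fin 2 → ℂ → E →L[ℝ] ℂ} {St : Fin 2 → ℂ → E → ℂ} (hR : 0 ≤ R)
    {v : E} (hS₀ : ∀ i, ContinuousOn (fun z => S₀ i z v) (sphere c R))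
    (hSt : ∀ i, IsC1Family (sphere c R) (St i)) (t w : E) :
    fderiv ℝ (hirotaOneForm c R S₀ St v) t w = (1 / (2 * Real.pi * Complex.I)) *
      circlePairing c R (fun i z => S₀ i z v) (fun i z => fderiv ℝ (St i z) t w) := by
  have hfamily : IsC1Family (sphere c R) fun z s => S₀ 0 z v * St 1 z s - S₀ 1 z v * St 0 z s :=
    ((hSt 1).weight_mul (hS₀ 0)).sub ((hSt 0).weight_mul (hS₀ 1))
  have hpairing : fderiv ℝ (fun s => circlePairing c R (fun i z => S₀ i z v)
        (fun i z => St i z s)) t w =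
      circlePairing c R (fun i z => S₀ i z v) (fun i z => fderiv ℝ (St i z) t w) := by
    refine (hfamily.fderiv_circleIntegral_apply hR t w).trans
      (circleIntegral.integral_congr hR fun z hz => ?_)
    have hdiff (i : Fin 2) := (hSt i).differentiableAt z hz t
    simp [fderiv_fun_sub ((hdiff 1).const_mul _) ((hdiff 0).const_mul _),
      fderiv_const_mul (hdiff _)]
  have hdiff : DifferentiableAt ℝ (fun s => circlePairing c R (fun i z => S₀ i z v)
      (fun i z => St i z s)) t := (hfamily.hasFDerivAt_circleIntegral hR t).differentiableAt
  rw [← hpairing]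
  exact DFunLike.congr_fun (fderiv_const_mul hdiff _) w

theorem stmt10_general {S₀ : Fin 2 → ℂ → E →L[ℝ] ℂ} {St S : Fin 2 → ℂ → E → ℂ} (hR : 0 < R)
    (hS₀ : ∀ i v, DiffContOnCl ℂ (fun z => S₀ i z v) (ball c R))
    (hSt : ∀ i, IsC1Family (sphere c R) (St i))
    (hhol : ∀ i t, DiffContOnCl ℂ (fun z => St i z t) (closedBall c R)ᶜ)
    (hinf : ∀ i t, Tendsto (fun z => St i z t) (cobounded ℂ) (𝓝 0))
    (hS : ∀ i z t, S i z t = S₀ i z t + St i z t) {t v w : E}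
    (hHirota : circlePairing c R (fun i z => fderiv ℝ (S i z) t v)
      (fun i z => fderiv ℝ (S i z) t w) = 0) :
    fderiv ℝ (hirotaOneForm c R S₀ St w) t v = fderiv ℝ (hirotaOneForm c R S₀ St v) t w := by
  set p : E → Fin 2 → ℂ → ℂ := fun u i z => S₀ i z u with hp
  set q : E → Fin 2 → ℂ → ℂ := fun u i z => fderiv ℝ (St i z) t u with hq
  have hpc (u : E) (i : Fin 2) : ContinuousOn (p u i) (sphere c R) :=
    (hS₀ i u).continuousOn_ball.mono sphere_subset_closedBall
  have hqc (u : E) (i : Fin 2) : ContinuousOn (q u i) (sphere c R) :=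
    (hSt i).continuousOn_fderiv_apply t u
  have hsplit (u : E) (i : Fin 2) :
      EqOn (fun z => fderiv ℝ (S i z) t u) ((p u + q u) i) (sphere c R) := fun z hz => by
    simp [hp, hq, funext (hS i z), fderiv_fun_add (S₀ i z).differentiableAt
      ((hSt i).differentiableAt z hz t)]
  have hmixed : circlePairing c R (p v) (q w) - circlePairing c R (p w) (q v) = 0 :=
    calc circlePairing c R (p v) (q w) - circlePairing c R (p w) (q v)
        = circlePairing c R (p v + q v) (p w + q w) := by
          rw [circlePairing_add_add hR.le (hpc v) (hqc v) (hpc w) (hqc w),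
            circlePairing_eq_zero_of_diffContOnCl_ball hR.le (hS₀ · v) (hS₀ · w),
            circlePairing_fderiv_eq_zero hR hSt hhol hinf, circlePairing_swap c R (p w) (q v),
            zero_add, add_zero, sub_eq_add_neg]
      _ = 0 := (circlePairing_congr hR.le (hsplit v) (hsplit w)).symm.trans hHirota
  rw [fderiv_hirotaOneForm hR.le (hpc w) hSt, fderiv_hirotaOneForm hR.le (hpc v) hSt,
    sub_eq_zero.1 hmixed]

end OneForm

section FreeAction

variable {ι : Type*} [Fintype ι] (idx : ι → Fin 2 × ℕ)

/-- The free part `S₀ⁱ(z, t) = Σₙ tⁱₙ z^(n-1)`, as a linear form in the times. The time with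
coordinate `a` is `tⁱₙ` for `(i, n) = idx a`. -/
noncomputable def freeAction (i : Fin 2) (z : ℂ) : (ι → ℝ) →L[ℝ] ℂ :=
  (Fintype.linearCombination ℝ fun a =>
    if (idx a).1 = i then z ^ ((idx a).2 - 1) else 0).toContinuousLinearMap

theorem freeAction_apply (i : Fin 2) (z : ℂ) (t : ι → ℝ) :
    freeAction idx i z t = ∑ a, if (idx a).1 = i then (t a : ℂ) * z ^ ((idx a).2 - 1) else 0 := by
  simp [freeAction, Fintype.linearCombination_apply]

theorem freeAction_single [DecidableEq ι] (i : Fin 2) (z : ℂ) (a : ι) :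
    freeAction idx i z (Pi.single a 1) = if (idx a).1 = i then z ^ ((idx a).2 - 1) else 0 := by
  simp [freeAction, Fintype.linearCombination_apply_single]

theorem differentiable_freeAction (i : Fin 2) (t : ι → ℝ) :
    Differentiable ℂ fun z => freeAction idx i z t := by
  simp only [freeAction_apply]
  refine Differentiable.fun_sum fun a _ => ?_
  split_ifs <;> fun_prop

end FreeAction

/-- on a finitely truncated time space, with Sⁱ = Sⁱ₀ + S̃ⁱ
(Sⁱ₀(z,t) = Σ tⁱₙ z^{n−1}), S̃ⁱ holomorphic outside the unit disc and vanishing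
at ∞, smooth in the times, and satisfying the Hirota-type property that
g_{ab}(z) = ∂ₐS¹∂_bS² − ∂_bS¹∂ₐS² is the boundary value of a function holomorphic
in the unit disc (all its nonnegative moments on the circle vanish), the one-form
θₐ = (1/2πi)∮(S̃² ∂ₐS¹₀ − S̃¹ ∂ₐS²₀)dz is closed: ∂ₐθ_b = ∂_bθₐ.
Here each time coordinate a carries a label idx a = (i, n): it is the time tⁱₙ. -/
theorem stmt10 {d : ℕ} (idx : Fin d → Fin 2 × ℕ) (hidx : ∀ a, 1 ≤ (idx a).2)
    (St : Fin 2 → ℂ → (Fin d → ℝ) → ℂ)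
    (hSt : ∀ i, ContDiff ℝ (⊤ : ℕ∞) fun p : ℂ × (Fin d → ℝ) => St i p.1 p.2)
    (hhol : ∀ i t, DifferentiableOn ℂ (fun z => St i z t) {z : ℂ | 1 < ‖z‖})
    (hinf : ∀ i t, Filter.Tendsto (fun z => St i z t) (Bornology.cobounded ℂ) (nhds 0))
    (S : Fin 2 → ℂ → (Fin d → ℝ) → ℂ)
    (hS : ∀ i z t, S i z t
      = (∑ a, if (idx a).1 = i then (t a : ℂ) * z ^ ((idx a).2 - 1) else 0) + St i z t)
    (hHirota : ∀ (a b : Fin d) (t : Fin d → ℝ) (k : ℕ),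
      (∮ z in C(0, 1), (ptd a (fun t' => S 0 z t') t * ptd b (fun t' => S 1 z t') t
        - ptd b (fun t' => S 0 z t') t * ptd a (fun t' => S 1 z t') t) * z ^ k) = 0)
    (θ : Fin d → (Fin d → ℝ) → ℂ)
    (hθ : ∀ a t, θ a t = (1 / (2 * Real.pi * Complex.I)) *
      ∮ z in C(0, 1),
        (St 1 z t * (if (idx a).1 = 0 then z ^ ((idx a).2 - 1) else 0)
          - St 0 z t * (if (idx a).1 = 1 then z ^ ((idx a).2 - 1) else 0))) :
    ∀ (a b : Fin d) (t : Fin d → ℝ), ptd a (θ b) t = ptd b (θ a) t := by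
  intro a b t
  have hθ_eq (e : Fin d) : θ e = hirotaOneForm 0 1 (freeAction idx) St (Pi.single e 1) := by
    funext s
    simp only [hθ, hirotaOneForm, circlePairing, freeAction_single, mul_comm]
  have hcont (i : Fin 2) (s : Fin d → ℝ) : Continuous fun z => St i z s :=
    (hSt i).continuous.comp (by fun_prop : Continuous fun z => (z, s))
  have hS_eq (i : Fin 2) (z : ℂ) (s : Fin d → ℝ) : S i z s = freeAction idx i z s + St i z s := by
    rw [hS, freeAction_apply]
  have hH : circlePairing 0 1 (fun i z => ptd a (S i z) t) (fun i z => ptd b (S i z) t) = 0 := by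
    simpa only [circlePairing, pow_zero, one_mul, mul_comm] using hHirota a b t 0
  rw [hθ_eq a, hθ_eq b]
  exact stmt10_general one_pos (fun i v => (differentiable_freeAction idx i v).diffContOnCl)
    (fun i => .of_contDiff _ ((hSt i).of_le (by simp)))
    (fun i s => diffContOnCl_compl_closedBall_zero (hhol i s) (hcont i s)) hinf hS_eq hH
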